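/- arXiv:2006.05601 — 2 statements merged into one kernel-verified Lean document; each statement's English description precedes it below -/
import Mathlib

section
/- (Chain yields a non-star pairing equality) Let X_1, X_2, X_3, X_4 be ±1-valued random variables on a standard Borel probability space with Var(X_l) > 0 for all l, forming a Markov chain in this order: for all 1 ≤ i < j < k ≤ 4, X_i and X_k are conditionally independent given the σ-algebra generated by X_j. Let X_l^e = ε_l X_l be noisy versions, where ε_1, …, ε_4 are ±1-valued with P(ε_l = −1) = q_l ∈ [0, 1/2) and ε_1, …, ε_4, (X_1, …, X_4) are mutually independent, and write Σ'_{i,j} = Cov(X_i^e, X_j^e). Then Σ'_{1,3}·Σ'_{2,4} = Σ'_{1,4}·Σ'_{2,3}. -/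
open MeasureTheory ProbabilityTheory

/-- Covariance `Cov(X,Y) = E[XY] - E[X]E[Y]`. -/
noncomputable def cov {Ω : Type*} [MeasurableSpace Ω] (μ : Measure Ω) (X Y : Ω → ℝ) : ℝ :=
  (∫ ω, X ω * Y ω ∂μ) - (∫ ω, X ω ∂μ) * (∫ ω, Y ω ∂μ)

/-- Variance `Var(X) = Cov(X,X)`. -/
noncomputable def var {Ω : Type*} [MeasurableSpace Ω] (μ : Measure Ω) (X : Ω → ℝ) : ℝ :=
  cov μ X X

/-!
A real function of a variable `X₂` with at most two values agrees with an affine one, so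
`E[X₁ | X₂] = a + b X₂`. If `Y` is conditionally independent of `X₁` given `X₂`, then
`E[X₁ Y] = E[E[X₁ | X₂] Y]`, hence `Cov(X₁, Y) = b Cov(X₂, Y)` with a factor `b` which is the same
for `Y = X₃` and `Y = X₄`. Independent multiplicative noise scales each covariance by
`E[ε_i] E[ε_j]`, and both sides of the identity collect the same four expectations.
-/

section TwoValued

variable {Ω E : Type*} {mΩ : MeasurableSpace Ω} {μ : Measure Ω} [NormedAddCommGroup E]

lemma memLp_of_ae_eq_or_eq [IsFiniteMeasure μ] {f : Ω → E} {s t : E} (p : ENNReal)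
    (hf : AEStronglyMeasurable f μ) (hst : ∀ᵐ ω ∂μ, f ω = s ∨ f ω = t) : MemLp f p μ := by
  refine .of_bound hf (max ‖s‖ ‖t‖) ?_
  filter_upwards [hst] with ω hω
  rcases hω with hω | hω <;> simp [hω]

lemma exists_ae_eq_add_smul_of_stronglyMeasurable_comap [NormedSpace ℝ E] [CompleteSpace E]
    {Z : Ω → ℝ} {s t : ℝ} {g : Ω → E} (hst : ∀ᵐ ω ∂μ, Z ω = s ∨ Z ω = t)
    (hg : StronglyMeasurable[MeasurableSpace.comap Z inferInstance] g) :
    ∃ a b : E, g =ᵐ[μ] fun ω ↦ a + Z ω • b := by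
  obtain ⟨h, -, rfl⟩ := hg.exists_eq_measurable_comp
  refine ⟨h s - s • slope h s t, slope h s t, ?_⟩
  filter_upwards [hst] with ω hω
  rcases hω with hω | hω
  · simp [hω]
  · have : (t - s) • slope h s t = h t - h s := sub_smul_slope h s t
    rw [Function.comp_apply, hω, sub_add_eq_add_sub, add_sub_assoc, ← sub_smul, this,
      add_sub_cancel]

end TwoValued

section Covariance

variable {Ω : Type*} {mΩ : MeasurableSpace Ω} {μ : Measure Ω}

lemma cov_eq_covariance [IsProbabilityMeasure μ] {X Y : Ω → ℝ} (hX : MemLp X 2 μ)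
    (hY : MemLp Y 2 μ) : cov μ X Y = cov[X, Y; μ] :=
  (covariance_eq_sub hX hY).symm

lemma cov_mul_mul_of_indepFun [IsProbabilityMeasure μ] {X Y ε η : Ω → ℝ} (hX : MemLp X 2 μ)
    (hY : MemLp Y 2 μ) (hε : AEStronglyMeasurable ε μ) (hη : AEStronglyMeasurable η μ)
    (hεη : ε ⟂ᵢ[μ] η) (hnoise : (fun ω ↦ (ε ω, η ω)) ⟂ᵢ[μ] (fun ω ↦ (X ω, Y ω))) :
    cov μ (fun ω ↦ ε ω * X ω) (fun ω ↦ η ω * Y ω) = μ[ε] * μ[η] * cov[X, Y; μ] := by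
  have hεX : ε ⟂ᵢ[μ] X := hnoise.comp measurable_fst measurable_fst
  have hηY : η ⟂ᵢ[μ] Y := hnoise.comp measurable_snd measurable_snd
  have hprod : (fun ω ↦ ε ω * η ω) ⟂ᵢ[μ] (fun ω ↦ X ω * Y ω) :=
    hnoise.comp measurable_mul measurable_mul
  have hmixed : ∫ ω, ε ω * X ω * (η ω * Y ω) ∂μ = μ[ε] * μ[η] * ∫ ω, X ω * Y ω ∂μ :=
    calc ∫ ω, ε ω * X ω * (η ω * Y ω) ∂μ
      _ = ∫ ω, ε ω * η ω * (X ω * Y ω) ∂μ :=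
          integral_congr_ae (.of_forall fun ω ↦ mul_mul_mul_comm _ _ _ _)
      _ = μ[ε] * μ[η] * ∫ ω, X ω * Y ω ∂μ := by
          rw [hprod.integral_fun_mul_eq_mul_integral (hε.mul hη) (hX.1.mul hY.1),
            hεη.integral_fun_mul_eq_mul_integral hε hη]
  rw [← cov_eq_covariance hX hY, cov, cov, hmixed,
    hεX.integral_fun_mul_eq_mul_integral hε hX.1, hηY.integral_fun_mul_eq_mul_integral hη hY.1]
  ring

lemma covariance_congr_left {X X' : Ω → ℝ} (h : X =ᵐ[μ] X') (Y : Ω → ℝ) :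
    cov[X, Y; μ] = cov[X', Y; μ] := by
  rw [covariance, covariance, integral_congr_ae h]
  refine integral_congr_ae ?_
  filter_upwards [h] with ω hω
  rw [hω]

end Covariance

section ConditionalIndependence

variable {Ω : Type*} {m mΩ : MeasurableSpace Ω} [StandardBorelSpace Ω] {μ : Measure Ω}
  {X Y Z : Ω → ℝ}

lemma condExp_mul_of_condIndepFun [IsFiniteMeasure μ] {hm : m ≤ mΩ} (hXm : Measurable X)
    (hYm : Measurable Y) (hX : Integrable X μ) (hY : Integrable Y μ)
    (hXY : Integrable (X * Y) μ) (hci : CondIndepFun m hm X Y μ) :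
    μ[X * Y | m] =ᵐ[μ] μ[X | m] * μ[Y | m] := by
  have hker := ae_of_ae_trim hm ((condIndepFun_iff_map_prod_eq_prod_map_map hXm hYm).1 hci)
  filter_upwards [hker, condExp_ae_eq_integral_condExpKernel hm hXY,
    condExp_ae_eq_integral_condExpKernel hm hX, condExp_ae_eq_integral_condExpKernel hm hY]
    with ω hω hXYω hXω hYω
  have hindep : X ⟂ᵢ[condExpKernel μ m ω] Y := by
    rw [indepFun_iff_map_prod_eq_prod_map_map hXm.aemeasurable hYm.aemeasurable]
    simpa only [Kernel.map_apply _ (hXm.prodMk hYm), Kernel.prod_apply, Kernel.map_apply _ hXm,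
      Kernel.map_apply _ hYm] using hω
  rw [hXYω, Pi.mul_apply, hXω, hYω]
  exact hindep.integral_mul_eq_mul_integral hXm.aestronglyMeasurable hYm.aestronglyMeasurable

lemma covariance_condExp_left_of_condIndepFun [IsProbabilityMeasure μ] {hm : m ≤ mΩ}
    (hXm : Measurable X) (hYm : Measurable Y) (hX : MemLp X 2 μ) (hY : MemLp Y 2 μ)
    (hci : CondIndepFun m hm X Y μ) : cov[μ[X | m], Y; μ] = cov[X, Y; μ] := by
  have hcond : MemLp μ[X | m] 2 μ := hX.condExp one_le_two
  have hpull : μ[μ[X | m] * Y | m] =ᵐ[μ] μ[X | m] * μ[Y | m] :=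
    condExp_mul_of_stronglyMeasurable_left stronglyMeasurable_condExp
      (hcond.integrable_mul hY) (hY.integrable one_le_two)
  have hsplit : μ[X * Y | m] =ᵐ[μ] μ[X | m] * μ[Y | m] :=
    condExp_mul_of_condIndepFun hXm hYm (hX.integrable one_le_two) (hY.integrable one_le_two)
      (hX.integrable_mul hY) hci
  have hintegral : ∫ ω, (μ[X | m] * Y) ω ∂μ = ∫ ω, (X * Y) ω ∂μ := by
    rw [← integral_condExp hm, integral_congr_ae (hpull.trans hsplit.symm), integral_condExp hm]
  rw [covariance_eq_sub hcond hY, covariance_eq_sub hX hY, hintegral, integral_condExp hm]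

lemma exists_covariance_eq_mul_of_condIndepFun [IsProbabilityMeasure μ] {s t : ℝ}
    (hZm : Measurable Z) (hst : ∀ᵐ ω ∂μ, Z ω = s ∨ Z ω = t) (hXm : Measurable X)
    (hX : MemLp X 2 μ) :
    ∃ b : ℝ, ∀ Y : Ω → ℝ, Measurable Y → MemLp Y 2 μ → X ⟂ᵢ[Z, hZm; μ] Y →
      cov[X, Y; μ] = b * cov[Z, Y; μ] := by
  obtain ⟨a, b, hab⟩ := exists_ae_eq_add_smul_of_stronglyMeasurable_comap hst
    (stronglyMeasurable_condExp (μ := μ) (f := X))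
  refine ⟨b, fun Y hYm hY hci ↦ ?_⟩
  have hZ : Integrable Z μ :=
    (memLp_of_ae_eq_or_eq 1 hZm.aestronglyMeasurable hst).integrable le_rfl
  calc cov[X, Y; μ]
    _ = cov[μ[X | MeasurableSpace.comap Z inferInstance], Y; μ] :=
        (covariance_condExp_left_of_condIndepFun hXm hYm hX hY hci).symm
    _ = cov[fun ω ↦ a + Z ω * b, Y; μ] := covariance_congr_left hab Y
    _ = b * cov[Z, Y; μ] := by
        rw [covariance_const_add_left (hZ.mul_const b), covariance_mul_const_left, mul_comm]

end ConditionalIndependence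

theorem chain_nonstar_equality_general {Ω : Type*} [MeasurableSpace Ω] [StandardBorelSpace Ω]
    {μ : Measure Ω} [IsProbabilityMeasure μ] {X1 X2 X3 X4 ε1 ε2 ε3 ε4 : Ω → ℝ} {s t : ℝ}
    (hX1 : Measurable X1) (hX2 : Measurable X2) (hX3 : Measurable X3) (hX4 : Measurable X4)
    (hX1L2 : MemLp X1 2 μ) (hX2st : ∀ᵐ ω ∂μ, X2 ω = s ∨ X2 ω = t)
    (hX3L2 : MemLp X3 2 μ) (hX4L2 : MemLp X4 2 μ)
    (hε1 : Integrable ε1 μ) (hε2 : Integrable ε2 μ)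
    (hε3 : Integrable ε3 μ) (hε4 : Integrable ε4 μ)
    (hci13 : X1 ⟂ᵢ[X2, hX2; μ] X3) (hci14 : X1 ⟂ᵢ[X2, hX2; μ] X4)
    (hε13 : ε1 ⟂ᵢ[μ] ε3) (hε24 : ε2 ⟂ᵢ[μ] ε4) (hε14 : ε1 ⟂ᵢ[μ] ε4) (hε23 : ε2 ⟂ᵢ[μ] ε3)
    (hnoise : (fun ω ↦ (ε1 ω, ε2 ω, ε3 ω, ε4 ω)) ⟂ᵢ[μ] (fun ω ↦ (X1 ω, X2 ω, X3 ω, X4 ω))) :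
    cov μ (fun ω ↦ ε1 ω * X1 ω) (fun ω ↦ ε3 ω * X3 ω)
        * cov μ (fun ω ↦ ε2 ω * X2 ω) (fun ω ↦ ε4 ω * X4 ω)
      = cov μ (fun ω ↦ ε1 ω * X1 ω) (fun ω ↦ ε4 ω * X4 ω)
        * cov μ (fun ω ↦ ε2 ω * X2 ω) (fun ω ↦ ε3 ω * X3 ω) := by
  have hX2L2 : MemLp X2 2 μ := memLp_of_ae_eq_or_eq 2 hX2.aestronglyMeasurable hX2st
  obtain ⟨b, hb⟩ := exists_covariance_eq_mul_of_condIndepFun hX2 hX2st hX1 hX1L2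
  have hpair {f g : ℝ × ℝ × ℝ × ℝ → ℝ} (hf : Measurable f) (hg : Measurable g) :=
    hnoise.comp (hf.prodMk hg) (hf.prodMk hg)
  have hcov13 : cov μ (fun ω ↦ ε1 ω * X1 ω) (fun ω ↦ ε3 ω * X3 ω)
      = μ[ε1] * μ[ε3] * cov[X1, X3; μ] :=
    cov_mul_mul_of_indepFun hX1L2 hX3L2 hε1.1 hε3.1 hε13 <|
      hpair measurable_fst measurable_snd.snd.fst
  have hcov24 : cov μ (fun ω ↦ ε2 ω * X2 ω) (fun ω ↦ ε4 ω * X4 ω)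
      = μ[ε2] * μ[ε4] * cov[X2, X4; μ] :=
    cov_mul_mul_of_indepFun hX2L2 hX4L2 hε2.1 hε4.1 hε24 <|
      hpair measurable_snd.fst measurable_snd.snd.snd
  have hcov14 : cov μ (fun ω ↦ ε1 ω * X1 ω) (fun ω ↦ ε4 ω * X4 ω)
      = μ[ε1] * μ[ε4] * cov[X1, X4; μ] :=
    cov_mul_mul_of_indepFun hX1L2 hX4L2 hε1.1 hε4.1 hε14 <|
      hpair measurable_fst measurable_snd.snd.snd
  have hcov23 : cov μ (fun ω ↦ ε2 ω * X2 ω) (fun ω ↦ ε3 ω * X3 ω)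
      = μ[ε2] * μ[ε3] * cov[X2, X3; μ] :=
    cov_mul_mul_of_indepFun hX2L2 hX3L2 hε2.1 hε3.1 hε23 <|
      hpair measurable_snd.fst measurable_snd.snd.fst
  rw [hcov13, hcov24, hcov14, hcov23, hb X3 hX3 hX3L2 hci13, hb X4 hX4 hX4L2 hci14]
  ring

/-- Chain yields a non-star pairing equality: if ±1-valued `X_1, X_2, X_3, X_4`
with positive variances form a Markov chain in this order, and `X_l^e = ε_l X_l` are noisy
versions with flip probabilities `q_l ∈ [0, 1/2)`, where `ε_1, …, ε_4, (X_1, …, X_4)` are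
mutually independent, then the noisy covariances satisfy
`Σ'_{1,3} Σ'_{2,4} = Σ'_{1,4} Σ'_{2,3}`. -/
theorem chain_nonstar_equality {Ω : Type*} [MeasurableSpace Ω] [StandardBorelSpace Ω]
    (μ : Measure Ω) [IsProbabilityMeasure μ]
    (X1 X2 X3 X4 ε1 ε2 ε3 ε4 : Ω → ℝ) (q1 q2 q3 q4 : ℝ)
    (hX1 : Measurable X1) (hX2 : Measurable X2) (hX3 : Measurable X3) (hX4 : Measurable X4)
    (hε1 : Measurable ε1) (hε2 : Measurable ε2) (hε3 : Measurable ε3) (hε4 : Measurable ε4)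
    (hX1pm : ∀ᵐ ω ∂μ, X1 ω = 1 ∨ X1 ω = -1)
    (hX2pm : ∀ᵐ ω ∂μ, X2 ω = 1 ∨ X2 ω = -1)
    (hX3pm : ∀ᵐ ω ∂μ, X3 ω = 1 ∨ X3 ω = -1)
    (hX4pm : ∀ᵐ ω ∂μ, X4 ω = 1 ∨ X4 ω = -1)
    (hε1pm : ∀ᵐ ω ∂μ, ε1 ω = 1 ∨ ε1 ω = -1)
    (hε2pm : ∀ᵐ ω ∂μ, ε2 ω = 1 ∨ ε2 ω = -1)
    (hε3pm : ∀ᵐ ω ∂μ, ε3 ω = 1 ∨ ε3 ω = -1)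
    (hε4pm : ∀ᵐ ω ∂μ, ε4 ω = 1 ∨ ε4 ω = -1)
    (hvar1 : 0 < var μ X1) (hvar2 : 0 < var μ X2)
    (hvar3 : 0 < var μ X3) (hvar4 : 0 < var μ X4)
    -- Markov chain: `X_i ⊥ X_k | σ(X_j)` for all `1 ≤ i < j < k ≤ 4`:
    (hci123 : CondIndepFun (MeasurableSpace.comap X2 inferInstance) hX2.comap_le X1 X3 μ)
    (hci124 : CondIndepFun (MeasurableSpace.comap X2 inferInstance) hX2.comap_le X1 X4 μ)
    (hci134 : CondIndepFun (MeasurableSpace.comap X3 inferInstance) hX3.comap_le X1 X4 μ)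
    (hci234 : CondIndepFun (MeasurableSpace.comap X3 inferInstance) hX3.comap_le X2 X4 μ)
    -- flip probabilities:
    (hq1 : (μ {ω | ε1 ω = -1}).toReal = q1) (hq1' : 0 ≤ q1) (hq1'' : q1 < 1 / 2)
    (hq2 : (μ {ω | ε2 ω = -1}).toReal = q2) (hq2' : 0 ≤ q2) (hq2'' : q2 < 1 / 2)
    (hq3 : (μ {ω | ε3 ω = -1}).toReal = q3) (hq3' : 0 ≤ q3) (hq3'' : q3 < 1 / 2)
    (hq4 : (μ {ω | ε4 ω = -1}).toReal = q4) (hq4' : 0 ≤ q4) (hq4'' : q4 < 1 / 2)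
    -- mutual independence of `ε_1, ε_2, ε_3, ε_4, (X_1, X_2, X_3, X_4)`:
    (hindep1 : IndepFun ε1 ε2 μ)
    (hindep2 : IndepFun (fun ω => (ε1 ω, ε2 ω)) ε3 μ)
    (hindep3 : IndepFun (fun ω => (ε1 ω, ε2 ω, ε3 ω)) ε4 μ)
    (hindep4 : IndepFun (fun ω => (ε1 ω, ε2 ω, ε3 ω, ε4 ω))
      (fun ω => (X1 ω, X2 ω, X3 ω, X4 ω)) μ) :
    cov μ (fun ω => ε1 ω * X1 ω) (fun ω => ε3 ω * X3 ω)
        * cov μ (fun ω => ε2 ω * X2 ω) (fun ω => ε4 ω * X4 ω)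
      = cov μ (fun ω => ε1 ω * X1 ω) (fun ω => ε4 ω * X4 ω)
        * cov μ (fun ω => ε2 ω * X2 ω) (fun ω => ε3 ω * X3 ω) := by
  have hpm {Z : Ω → ℝ} (hZ : Measurable Z) (hZpm : ∀ᵐ ω ∂μ, Z ω = 1 ∨ Z ω = -1) :
      MemLp Z 2 μ := memLp_of_ae_eq_or_eq 2 hZ.aestronglyMeasurable hZpm
  exact chain_nonstar_equality_general hX1 hX2 hX3 hX4 (hpm hX1 hX1pm) hX2pm (hpm hX3 hX3pm)
    (hpm hX4 hX4pm) ((hpm hε1 hε1pm).integrable one_le_two) ((hpm hε2 hε2pm).integrable one_le_two)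
    ((hpm hε3 hε3pm).integrable one_le_two) ((hpm hε4 hε4pm).integrable one_le_two) hci123 hci124
    (hindep2.comp measurable_fst measurable_id) (hindep3.comp measurable_snd.fst measurable_id)
    (hindep3.comp measurable_fst measurable_id) (hindep2.comp measurable_snd measurable_id) hindep4
end

section
/- (Second core identity of the unidentifiability construction) Let q_1, q_2, q_{k_1}, q_{k_2} ∈ [0, 1/2) and let Σ_{1,1}, Σ_{2,2}, Σ_{1,2}, Σ_{1,k_1}, Σ_{1,k_2}, Σ_{2,k_1}, Σ_{2,k_2}, Σ_{k_1,k_2} be real numbers with Σ_{2,2} > 0 and D := Σ_{1,2}²/Σ_{2,2} − Σ_{1,1} + 1 ∈ (0, 1], satisfying the correlation-decay relations Σ_{1,k_i}·Σ_{2,2} = Σ_{1,2}·Σ_{2,k_i} for i = 1, 2 and Σ_{k_1,k_2}·Σ_{2,2} = Σ_{2,k_1}·Σ_{2,k_2}. Define noisy quantities Σ'_{i,j} = (1−2q_i)(1−2q_j)Σ_{i,j} for all pairs and Σ'_{1,1} = 1 − (1−2q_1)²(1 − Σ_{1,1}); define q̂_1 = (1/2)(1 − (1−2q_1)√D), q̂_2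 = 0, q̂_{k_1} = q_{k_1}, q̂_{k_2} = q_{k_2}; and define Σ̂_{i,j} = Σ'_{i,j}/((1−2q̂_i)(1−2q̂_j)) and Σ̂_{1,1} = 1 − (1 − Σ'_{1,1})/(1−2q̂_1)². Then Σ̂_{k_1,k_2}·Σ̂_{1,1} = Σ̂_{1,k_1}·Σ̂_{1,k_2}. -/
/-!
Noise is undone by rescaling, so changing the error probability of `X_1` from `q_1` to `q̂_1`
multiplies each covariance of `X_1` by `r = (1 - 2 q_1) / (1 - 2 q̂_1)` but changes its variance
affinely, through `1 - Σ_{1,1}`. Because all correlations of `X_1` pass through `X_2`, the node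
`X_1` would separate `X_{k_1}` from `X_{k_2}` if its variance were `Σ_{1,2}² / Σ_{2,2}`, the part
explained by `X_2`. After rescaling, the variance has to be `r² Σ_{1,2}² / Σ_{2,2}`; solving this
for `r` gives `r² D = 1`, which is the choice of `q̂_1`.
-/

/-- The covariance observed between two `±1`-valued variables of covariance `c` after their signs
are flipped independently with probabilities `p` and `q`. -/
def noisyCov {R : Type*} [CommRing R] (p q c : R) : R :=
  (1 - 2 * p) * (1 - 2 * q) * c

/-- The variance observed for a `±1`-valued variable of variance `v` after its sign is flipped
independently with probability `q`; here `1 - v` is the square of the mean, which the noise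
multiplies by `1 - 2 * q`. -/
def noisyVar {R : Type*} [CommRing R] (q v : R) : R :=
  1 - (1 - 2 * q) ^ 2 * (1 - v)

section Denoising

variable {K : Type*} [Field K] {p q : K}

theorem noisyCov_eq_iff (hp : 1 - 2 * p ≠ 0) (hq : 1 - 2 * q ≠ 0) {c n : K} :
    noisyCov p q c = n ↔ c = n / ((1 - 2 * p) * (1 - 2 * q)) := by
  rw [noisyCov, eq_div_iff (mul_ne_zero hp hq), mul_comm]

theorem noisyVar_eq_iff (hq : 1 - 2 * q ≠ 0) {v n : K} :
    noisyVar q v = n ↔ v = 1 - (1 - n) / (1 - 2 * q) ^ 2 := by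
  calc noisyVar q v = n
      ↔ (1 - v) * (1 - 2 * q) ^ 2 = 1 - n := by
        rw [noisyVar, sub_eq_iff_eq_add', eq_sub_iff_add_eq, mul_comm, eq_comm]
    _ ↔ 1 - v = (1 - n) / (1 - 2 * q) ^ 2 := (eq_div_iff (pow_ne_zero 2 hq)).symm
    _ ↔ v = 1 - (1 - n) / (1 - 2 * q) ^ 2 := by
        rw [sub_eq_iff_eq_add, eq_sub_iff_add_eq', eq_comm]

end Denoising

theorem cov_mul_sq_eq_of_correlationDecay {R : Type*} [CommSemiring R] [IsCancelMulZero R]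
    {S22 S12 S1k1 S1k2 S2k1 S2k2 Sk1k2 : R} (hS22 : S22 ≠ 0)
    (hdecay1 : S1k1 * S22 = S12 * S2k1) (hdecay2 : S1k2 * S22 = S12 * S2k2)
    (hdecay3 : Sk1k2 * S22 = S2k1 * S2k2) :
    Sk1k2 * S12 ^ 2 = S1k1 * S1k2 * S22 := by
  refine mul_right_cancel₀ hS22 ?_
  calc Sk1k2 * S12 ^ 2 * S22
      = Sk1k2 * S22 * S12 ^ 2 := by ring
    _ = (S12 * S2k1) * (S12 * S2k2) := by rw [hdecay3]; ring
    _ = S1k1 * S1k2 * S22 * S22 := by rw [← hdecay1, ← hdecay2]; ring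

/-- `hqh` is `(1 - 2 * qh) ^ 2 = (1 - 2 * q) ^ 2 * D` with the denominator `S22` of `D` cleared. -/
theorem sq_mul_var_mul_eq_of_noisyVar_eq {R : Type*} [CommRing R] {q qh S11 S12 S22 E11 : R}
    (hvar : noisyVar qh E11 = noisyVar q S11)
    (hqh : (1 - 2 * qh) ^ 2 * S22 = (1 - 2 * q) ^ 2 * (S12 ^ 2 + (1 - S11) * S22)) :
    (1 - 2 * qh) ^ 2 * E11 * S22 = (1 - 2 * q) ^ 2 * S12 ^ 2 := by
  unfold noisyVar at hvar
  linear_combination hqh + S22 * hvar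

theorem leaf_neighbor_swap_pair_general {R : Type*} [CommRing R] [NoZeroDivisors R]
    {q1 qk1 qk2 qh1 qhk1 qhk2 S11 S22 S12 S1k1 S1k2 S2k1 S2k2 Sk1k2 E1k1 E1k2 Ek1k2 E11 : R}
    (hS22 : S22 ≠ 0) (hqh1 : 1 - 2 * qh1 ≠ 0)
    (hqhk1 : 1 - 2 * qhk1 ≠ 0) (hqhk2 : 1 - 2 * qhk2 ≠ 0)
    (hswap : (1 - 2 * qh1) ^ 2 * S22 = (1 - 2 * q1) ^ 2 * (S12 ^ 2 + (1 - S11) * S22))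
    (hdecay1 : S1k1 * S22 = S12 * S2k1) (hdecay2 : S1k2 * S22 = S12 * S2k2)
    (hdecay3 : Sk1k2 * S22 = S2k1 * S2k2)
    (h1k1 : noisyCov qh1 qhk1 E1k1 = noisyCov q1 qk1 S1k1)
    (h1k2 : noisyCov qh1 qhk2 E1k2 = noisyCov q1 qk2 S1k2)
    (hk1k2 : noisyCov qhk1 qhk2 Ek1k2 = noisyCov qk1 qk2 Sk1k2)
    (h11 : noisyVar qh1 E11 = noisyVar q1 S11) :
    Ek1k2 * E11 = E1k1 * E1k2 := by
  have hscale : (1 - 2 * qh1) ^ 2 * (1 - 2 * qhk1) * (1 - 2 * qhk2) * S22 ≠ 0 :=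
    mul_ne_zero (mul_ne_zero (mul_ne_zero (pow_ne_zero 2 hqh1) hqhk1) hqhk2) hS22
  refine mul_left_cancel₀ hscale ?_
  calc (1 - 2 * qh1) ^ 2 * (1 - 2 * qhk1) * (1 - 2 * qhk2) * S22 * (Ek1k2 * E11)
      = noisyCov qhk1 qhk2 Ek1k2 * ((1 - 2 * qh1) ^ 2 * E11 * S22) := by
        rw [noisyCov]; ring
    _ = noisyCov qk1 qk2 Sk1k2 * ((1 - 2 * q1) ^ 2 * S12 ^ 2) := by
        rw [hk1k2, sq_mul_var_mul_eq_of_noisyVar_eq h11 hswap]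
    _ = (1 - 2 * q1) ^ 2 * (1 - 2 * qk1) * (1 - 2 * qk2) * (Sk1k2 * S12 ^ 2) := by
        rw [noisyCov]; ring
    _ = noisyCov q1 qk1 S1k1 * noisyCov q1 qk2 S1k2 * S22 := by
        rw [cov_mul_sq_eq_of_correlationDecay hS22 hdecay1 hdecay2 hdecay3, noisyCov, noisyCov]
        ring
    _ = noisyCov qh1 qhk1 E1k1 * noisyCov qh1 qhk2 E1k2 * S22 := by rw [h1k1, h1k2]
    _ = (1 - 2 * qh1) ^ 2 * (1 - 2 * qhk1) * (1 - 2 * qhk2) * S22 * (E1k1 * E1k2) := by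
        rw [noisyCov, noisyCov]; ring

/-- Second core identity of the unidentifiability construction.
Here `S__` denote non-noisy covariances, `N__` the noisy covariances, `qh_` the alternative
error probabilities, and `E__` the re-estimated covariances; the hypotheses encode
`X_1 ⊥ X_{k_i} | X_2` and `X_{k_1} ⊥ X_{k_2} | X_2`, and the conclusion
`Ek1k2 ⬝ E11 = E1k1 ⬝ E1k2` encodes `X_{k_1} ⊥ X_{k_2} | X_1`. -/
theorem leaf_neighbor_swap_pair
    (q1 q2 qk1 qk2 : ℝ)
    (hq1 : 0 ≤ q1) (hq1' : q1 < 1 / 2)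
    (hq2 : 0 ≤ q2) (hq2' : q2 < 1 / 2)
    (hqk1 : 0 ≤ qk1) (hqk1' : qk1 < 1 / 2)
    (hqk2 : 0 ≤ qk2) (hqk2' : qk2 < 1 / 2)
    (S11 S22 S12 S1k1 S1k2 S2k1 S2k2 Sk1k2 : ℝ) (hS22 : 0 < S22)
    (D : ℝ) (hD : D = S12 ^ 2 / S22 - S11 + 1) (hD0 : 0 < D) (hD1 : D ≤ 1)
    -- correlation-decay relations:
    (hdecay1 : S1k1 * S22 = S12 * S2k1)
    (hdecay2 : S1k2 * S22 = S12 * S2k2)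
    (hdecay3 : Sk1k2 * S22 = S2k1 * S2k2)
    -- noisy quantities:
    (N12 N1k1 N1k2 N2k1 N2k2 Nk1k2 N11 : ℝ)
    (hN12 : N12 = (1 - 2 * q1) * (1 - 2 * q2) * S12)
    (hN1k1 : N1k1 = (1 - 2 * q1) * (1 - 2 * qk1) * S1k1)
    (hN1k2 : N1k2 = (1 - 2 * q1) * (1 - 2 * qk2) * S1k2)
    (hN2k1 : N2k1 = (1 - 2 * q2) * (1 - 2 * qk1) * S2k1)
    (hN2k2 : N2k2 = (1 - 2 * q2) * (1 - 2 * qk2) * S2k2)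
    (hNk1k2 : Nk1k2 = (1 - 2 * qk1) * (1 - 2 * qk2) * Sk1k2)
    (hN11 : N11 = 1 - (1 - 2 * q1) ^ 2 * (1 - S11))
    -- alternative error probabilities:
    (qh1 qh2 qhk1 qhk2 : ℝ)
    (hqh1 : qh1 = (1 / 2) * (1 - (1 - 2 * q1) * Real.sqrt D))
    (hqh2 : qh2 = 0) (hqhk1 : qhk1 = qk1) (hqhk2 : qhk2 = qk2)
    -- re-estimated quantities:
    (E1k1 E1k2 Ek1k2 E11 : ℝ)
    (hE1k1 : E1k1 = N1k1 / ((1 - 2 * qh1) * (1 - 2 * qhk1)))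
    (hE1k2 : E1k2 = N1k2 / ((1 - 2 * qh1) * (1 - 2 * qhk2)))
    (hEk1k2 : Ek1k2 = Nk1k2 / ((1 - 2 * qhk1) * (1 - 2 * qhk2)))
    (hE11 : E11 = 1 - (1 - N11) / (1 - 2 * qh1) ^ 2) :
    Ek1k2 * E11 = E1k1 * E1k2 := by
  have hfactor : 1 - 2 * qh1 = (1 - 2 * q1) * √D := by rw [hqh1]; ring
  have hqh1_ne : 1 - 2 * qh1 ≠ 0 := by
    rw [hfactor]
    exact mul_ne_zero (by linarith) (Real.sqrt_pos.2 hD0).ne'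
  have hqhk1_ne : 1 - 2 * qhk1 ≠ 0 := by linarith
  have hqhk2_ne : 1 - 2 * qhk2 ≠ 0 := by linarith
  have hDS22 : D * S22 = S12 ^ 2 + (1 - S11) * S22 := by
    rw [hD]; field_simp; ring
  have hswap : (1 - 2 * qh1) ^ 2 * S22 = (1 - 2 * q1) ^ 2 * (S12 ^ 2 + (1 - S11) * S22) := by
    rw [hfactor, mul_pow, Real.sq_sqrt hD0.le, mul_assoc, hDS22]
  exact leaf_neighbor_swap_pair_general hS22.ne' hqh1_ne hqhk1_ne hqhk2_ne hswap
    hdecay1 hdecay2 hdecay3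
    (((noisyCov_eq_iff hqh1_ne hqhk1_ne).2 hE1k1).trans hN1k1)
    (((noisyCov_eq_iff hqh1_ne hqhk2_ne).2 hE1k2).trans hN1k2)
    (((noisyCov_eq_iff hqhk1_ne hqhk2_ne).2 hEk1k2).trans hNk1k2)
    (((noisyVar_eq_iff hqh1_ne).2 hE11).trans hN11)
end
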